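/- Suppose H : ℝᵐ → ℝ is differentiable, μ-strongly convex, and has L-Lipschitz gradient; B is differentiable with component Lipschitz constants L̄_i, r := ΣL̄_i²; (A2) holds with τ > 0 and (A3) holds with ξ ≥ 0. Let y ∈ X and let x⁺ be a minimizer over X of x ↦ H(B(y)) + ∇(H∘B)(y)ᵀ(x − y) + (rL/2)‖x − y‖² + R(x). Then for every x ∈ X: H(B(x⁺)) ≤ H(B(x)) + ∇(H∘B)(y)ᵀ(x⁺ − x) + ((rL + ξ)/2)‖x⁺ − y‖² − ((τμ − ξ)/2)‖x − y‖². -/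

import Mathlib

open scoped RealInnerProductSpace

lemma aux_int (f f' : ℝ → ℝ) (c : ℝ) (hf : ∀ t, HasDerivAt f (f' t) t)
    (hb : ∀ t, 0 < t → f' t ≤ c * t) : f 1 - f 0 ≤ c / 2 := by
  have hd : ∀ t, HasDerivAt (fun t => f t - c / 2 * t ^ 2) (f' t - c * t) t := by
    intro t
    have h := (hf t).sub (((hasDerivAt_id t).pow 2).const_mul (c / 2))
    refine h.congr_deriv ?_
    simp
    ring
  have hanti : AntitoneOn (fun t => f t - c / 2 * t ^ 2) (Set.Icc 0 1) := by
    apply antitoneOn_of_deriv_nonpos (convex_Icc 0 1)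
    · exact fun t _ => (hd t).continuousAt.continuousWithinAt
    · exact fun t _ => (hd t).differentiableAt.differentiableWithinAt
    · intro t ht
      rw [interior_Icc] at ht
      rw [(hd t).deriv]
      linarith [hb t ht.1]
  have := hanti (Set.left_mem_Icc.2 zero_le_one) (Set.right_mem_Icc.2 zero_le_one) zero_le_one
  simp at this
  linarith

lemma aux_line {E : Type*} [NormedAddCommGroup E] [NormedSpace ℝ E] (y d : E) (t : ℝ) :
    HasDerivAt (fun t : ℝ => y + t • d) d t := by
  simpa using ((hasDerivAt_id t).smul_const d).const_add y

lemma aux_curve {E F : Type*} [NormedAddCommGroup E] [NormedSpace ℝ E]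
    [NormedAddCommGroup F] [InnerProductSpace ℝ F]
    (B : E → F) (hB : Differentiable ℝ B) (y z : E) (g : F) (ξ : ℝ)
    (h : ∀ t : ℝ, 0 < t →
      ⟪g, (fderiv ℝ B (y + t • (z - y)) - fderiv ℝ B y) (t • (z - y))⟫
        ≤ ξ * ‖t • (z - y)‖ ^ 2) :
    ⟪g, B z - B y⟫ - ⟪g, fderiv ℝ B y (z - y)⟫ ≤ ξ / 2 * ‖z - y‖ ^ 2 := by
  have hd : ∀ t : ℝ, HasDerivAt
      (fun t : ℝ => ⟪g, B (y + t • (z - y))⟫ - t * ⟪g, fderiv ℝ B y (z - y)⟫)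
      (⟪g, (fderiv ℝ B (y + t • (z - y)) - fderiv ℝ B y) (z - y)⟫) t := by
    intro t
    have h1 := (hB (y + t • (z - y))).hasFDerivAt.comp_hasDerivAt t (aux_line y (z - y) t)
    have h2 := ((innerSL ℝ g).hasFDerivAt).comp_hasDerivAt t h1
    have h3 := h2.sub ((hasDerivAt_id t).mul_const (⟪g, fderiv ℝ B y (z - y)⟫))
    refine h3.congr_deriv ?_
    simp [inner_sub_right]
  have := aux_int _ _ (ξ * ‖z - y‖ ^ 2) hd (by
    intro t ht
    have h4 := h t ht
    rw [map_smul, inner_smul_right, norm_smul, Real.norm_eq_abs, mul_pow, sq_abs] at h4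
    refine le_of_mul_le_mul_left ?_ ht
    linarith)
  simp only [one_smul, zero_smul, add_zero, add_sub_cancel, one_mul, zero_mul, sub_zero] at this
  rw [inner_sub_right]
  linarith

lemma aux_descent {F : Type*} [NormedAddCommGroup F] [InnerProductSpace ℝ F] [CompleteSpace F]
    (H : F → ℝ) (hH : Differentiable ℝ H) (L : ℝ)
    (hl : ∀ u v, ‖gradient H u - gradient H v‖ ≤ L * ‖u - v‖) (u v : F) :
    H v ≤ H u + ⟪gradient H u, v - u⟫ + L / 2 * ‖v - u‖ ^ 2 := by
  have hd : ∀ t : ℝ, HasDerivAt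
      (fun t : ℝ => H (u + t • (v - u)) - t * ⟪gradient H u, v - u⟫)
      (⟪gradient H (u + t • (v - u)) - gradient H u, v - u⟫) t := by
    intro t
    have h1 := (hH (u + t • (v - u))).hasGradientAt.hasFDerivAt.comp_hasDerivAt t
      (aux_line u (v - u) t)
    have h3 := h1.sub ((hasDerivAt_id t).mul_const (⟪gradient H u, v - u⟫))
    refine h3.congr_deriv ?_
    simp [inner_sub_left]
  have := aux_int _ _ (L * ‖v - u‖ ^ 2) hd (by
    intro t ht
    have h4 := hl (u + t • (v - u)) u
    rw [add_sub_cancel_left, norm_smul, Real.norm_eq_abs, abs_of_pos ht] at h4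
    have h5 := real_inner_le_norm (gradient H (u + t • (v - u)) - gradient H u) (v - u)
    have h6 := mul_le_mul_of_nonneg_right h4 (norm_nonneg (v - u))
    nlinarith)
  simp only [one_smul, zero_smul, add_zero, add_sub_cancel, one_mul, zero_mul, sub_zero] at this
  linarith

/-- Inequality (2.7) in the proof of Theorem 2.1: if `x⁺` minimizes the C-FISTA
proximal subproblem at `y ∈ X`, then for every `x ∈ X`,
`H(B(x⁺)) ≤ H(B(x)) + ∇(H∘B)(y)ᵀ(x⁺ - x) + ((rL + ξ)/2)‖x⁺ - y‖² - ((τμ - ξ)/2)‖x - y‖²`. -/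
theorem cfista_subproblem_smooth_bound
    {n m : ℕ}
    (X : Set (EuclideanSpace ℝ (Fin n)))
    (hXclosed : IsClosed X) (hXconvex : Convex ℝ X)
    (H : EuclideanSpace ℝ (Fin m) → ℝ)
    (hHdiff : Differentiable ℝ H)
    (μ L : ℝ) (hμ : 0 < μ) (hL : 0 < L)
    (hHsc : ∀ u v, H v ≥ H u + ⟪gradient H u, v - u⟫ + μ / 2 * ‖v - u‖ ^ 2)
    (hHlip : ∀ u v, ‖gradient H u - gradient H v‖ ≤ L * ‖u - v‖)
    (B : EuclideanSpace ℝ (Fin n) → EuclideanSpace ℝ (Fin m))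
    (hB : Differentiable ℝ B)
    (Lbar : Fin m → ℝ) (hLbar : ∀ i, 0 ≤ Lbar i)
    (hA1lip : ∀ i, ∀ x y, |B x i - B y i| ≤ Lbar i * ‖x - y‖)
    (r : ℝ) (hr : r = ∑ i, Lbar i ^ 2)
    (τ : ℝ) (hτ : 0 < τ)
    (hA2 : ∀ x ∈ Submodule.span ℝ X, ∀ y ∈ Submodule.span ℝ X,
      τ * ‖x - y‖ ^ 2 ≤ ‖B x - B y‖ ^ 2)
    (ξ : ℝ) (hξ : 0 ≤ ξ)
    (hA3 : ∀ x' ∈ Submodule.span ℝ X, ∀ x'' ∈ Submodule.span ℝ X,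
      |⟪gradient H (B x'), (fderiv ℝ B x'' - fderiv ℝ B x') (x'' - x')⟫|
        ≤ ξ * ‖x'' - x'‖ ^ 2)
    (R : EuclideanSpace ℝ (Fin n) → ℝ) (hR : ConvexOn ℝ Set.univ R)
    (R : EuclideanSpace ℝ (Fin n) → ℝ) (hR : ConvexOn ℝ Set.univ R)
    (y : EuclideanSpace ℝ (Fin n)) (hy : y ∈ X)
    (xplus : EuclideanSpace ℝ (Fin n)) (hxplusX : xplus ∈ X)
    (hxplus : ∀ w ∈ X,
      H (B y) + ⟪gradient (fun v => H (B v)) y, xplus - y⟫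
          + r * L / 2 * ‖xplus - y‖ ^ 2 + R xplus
        ≤ H (B y) + ⟪gradient (fun v => H (B v)) y, w - y⟫
          + r * L / 2 * ‖w - y‖ ^ 2 + R w) :
    ∀ x ∈ X,
      H (B xplus) ≤ H (B x) + ⟪gradient (fun v => H (B v)) y, xplus - x⟫
        + (r * L + ξ) / 2 * ‖xplus - y‖ ^ 2 - (τ * μ - ξ) / 2 * ‖x - y‖ ^ 2 := by
  intro x hx
  have hgrad : ∀ v, ⟪gradient (fun v => H (B v)) y, v⟫
      = ⟪gradient H (B y), fderiv ℝ B y v⟫ := by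
    intro v
    have h1 := (hHdiff (B y)).hasFDerivAt.comp y (hB y).hasFDerivAt
    have h2 : fderiv ℝ (fun v => H (B v)) y = (fderiv ℝ H (B y)).comp (fderiv ℝ B y) := h1.fderiv
    simp [gradient, h2]
  have hys := Submodule.subset_span (R := ℝ) hy
  have hmem : ∀ z ∈ X, ∀ t : ℝ, y + t • (z - y) ∈ Submodule.span ℝ X := fun z hz t =>
    Submodule.add_mem _ hys (Submodule.smul_mem _ _
      (Submodule.sub_mem _ (Submodule.subset_span hz) hys))
  have h1 := aux_curve B hB y xplus (gradient H (B y)) ξ (by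
    intro t _
    have := hA3 y hys _ (hmem xplus hxplusX t)
    rw [add_sub_cancel_left] at this
    exact (le_abs_self _).trans this)
  have h2 := aux_curve B hB y x (-gradient H (B y)) ξ (by
    intro t _
    have := hA3 y hys _ (hmem x hx t)
    rw [add_sub_cancel_left] at this
    rw [inner_neg_left]
    exact (neg_le_abs _).trans this)
  rw [inner_neg_left, inner_neg_left] at h2
  have h3 := aux_descent H hHdiff L hHlip (B y) (B xplus)
  have h4 := hHsc (B y) (B x)
  have h5 := hA2 x (Submodule.subset_span hx) y hys
  have h6 : ‖B xplus - B y‖ ^ 2 ≤ r * ‖xplus - y‖ ^ 2 := by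
    rw [EuclideanSpace.norm_sq_eq, hr, Finset.sum_mul]
    refine Finset.sum_le_sum fun i _ => ?_
    rw [← mul_pow]
    exact pow_le_pow_left₀ (norm_nonneg _) (by simpa using hA1lip i xplus y) 2
  have h7 : ⟪gradient (fun v => H (B v)) y, xplus - x⟫
      = ⟪gradient H (B y), fderiv ℝ B y (xplus - y)⟫
        - ⟪gradient H (B y), fderiv ℝ B y (x - y)⟫ := by
    rw [hgrad, ← inner_sub_right, ← map_sub, sub_sub_sub_cancel_right]
  rw [h7]
  have h8 := mul_le_mul_of_nonneg_left h6 (half_pos hL).le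
  have h9 := mul_le_mul_of_nonneg_left h5 (half_pos hμ).le
  linarith
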